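/- Let d ≥ 1, let α = (α_1,…,α_d) be a multi-index with α_j > −1/2 for each j, and let n be a positive integer. There exists a constant C > 0, depending only on α, d and n, such that for every bounded measurable function f on (0,∞)^d and every t > 0, sup_{x ∈ (0,∞)^d} |∂^n_t P_t^α f(x)| ≤ C ∥f∥_∞ t^{−n}, where ∂^n_t denotes the n-th derivative in the variable t. -/

import Mathlib

open MeasureTheory Real Set

noncomputable def besselI (ν z : ℝ) : ℝ :=
  ∑' m : ℕ, (z / 2) ^ (2 * (m : ℝ) + ν) / (Nat.factorial m * Real.Gamma ((m : ℝ) + ν + 1))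

/-- The positive orthant `(0,∞)^d`. -/
def posOrthant (d : ℕ) : Set (Fin d → ℝ) := Set.univ.pi fun _ => Set.Ioi 0

/-- The Poisson–Laguerre kernel `p_t^α(x,y)`. -/
noncomputable def plKernel (d : ℕ) (α : Fin d → ℝ) (t : ℝ) (x y : Fin d → ℝ) : ℝ :=
  (1 / (2 * Real.sqrt π)) *
    ∫ r in Set.Ioo (0 : ℝ) 1,
      (t * Real.exp (t ^ 2 / (4 * Real.log r)) /
          ((1 - r) ^ d * (-Real.log r) ^ ((3 : ℝ) / 2))) *
        (∏ j, (y j / x j) ^ (α j / 2) *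
            Real.exp (-((r * x j + y j) / (1 - r)) - α j * Real.log r / 2) *
            besselI (α j) (2 * Real.sqrt (r * x j * y j) / (1 - r))) / r

/-- The Poisson–Laguerre semigroup `P_t^α f`, with the convention `P_0^α f = f`. -/
noncomputable def plP (d : ℕ) (α : Fin d → ℝ) (t : ℝ)
    (f : (Fin d → ℝ) → ℝ) (x : Fin d → ℝ) : ℝ :=
  if t = 0 then f x else ∫ y in posOrthant d, plKernel d α t x y * f y

/-- The weight in `r = e^{-s}` that subordinates the Poisson semigroup to the heat semigroup. -/
noncomputable def subWeight (c r : ℝ) : ℝ :=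
  Real.exp (c / Real.log r) / ((-Real.log r) ^ ((3 : ℝ) / 2) * r)

lemma image_exp_neg_inv : (fun v : ℝ => Real.exp (-v⁻¹)) '' Ioi 0 = Ioo 0 1 := by
  ext r
  constructor
  · rintro ⟨v, hv, rfl⟩
    have : 0 < v⁻¹ := inv_pos.2 hv
    exact ⟨Real.exp_pos _, by simpa using this⟩
  · rintro ⟨h0, h1⟩
    have hl := Real.log_neg h0 h1
    refine ⟨(-Real.log r)⁻¹, inv_pos.2 (neg_pos.2 hl), ?_⟩
    simp [Real.exp_log h0]

lemma integral_subWeight {c : ℝ} (hc : 0 < c) :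
    ∫ r in Ioo (0 : ℝ) 1, subWeight c r = √π / √c := by
  rw [← image_exp_neg_inv, integral_image_eq_integral_abs_deriv_smul (f' := fun v =>
    Real.exp (-v⁻¹) * (v ^ 2)⁻¹) measurableSet_Ioi]
  · have h := Real.integral_rpow_mul_exp_neg_mul_Ioi (a := 1 / 2) (by norm_num) hc
    rw [Real.Gamma_one_half_eq, ← Real.sqrt_eq_rpow, Real.sqrt_div zero_le_one] at h
    rw [show √π / √c = √1 / √c * √π by simp; ring, ← h]
    refine setIntegral_congr_fun measurableSet_Ioi fun v (hv : 0 < v) => ?_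
    have h3 : (v⁻¹) ^ ((3 : ℝ) / 2) = (v ^ 2)⁻¹ * (v ^ ((1 : ℝ) / 2 - 1))⁻¹ := by
      rw [← Real.rpow_neg hv.le, Real.inv_rpow hv.le, ← Real.rpow_neg hv.le, ← Real.rpow_natCast,
        ← Real.rpow_neg hv.le, ← Real.rpow_add hv]
      norm_num
    have hp : 0 < v ^ ((1 : ℝ) / 2 - 1) := Real.rpow_pos_of_pos hv _
    simp only [subWeight, Real.log_exp, neg_neg, smul_eq_mul, h3]
    rw [abs_of_pos (by positivity), show c / -v⁻¹ = -(c * v) by field_simp]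
    field_simp
  · intro v (hv : 0 < v)
    have := ((hasDerivAt_inv hv.ne').neg).exp
    exact (this.congr_deriv (by simp)).hasDerivWithinAt
  · intro a ha b hb h
    simpa using h

lemma integrableOn_subWeight {c : ℝ} (hc : 0 < c) :
    IntegrableOn (subWeight c) (Ioo 0 1) :=
  .of_integral_ne_zero (by rw [integral_subWeight hc]; positivity)

lemma iteratedDeriv_re_eq {U : Set ℂ} (hU : IsOpen U) {F : ℂ → ℂ} (hF : DifferentiableOn ℂ F U)
    {f : ℝ → ℝ} (hf : ∀ u : ℝ, (u : ℂ) ∈ U → f u = (F u).re) (n : ℕ) (u : ℝ) (hu : (u : ℂ) ∈ U) :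
    iteratedDeriv n f u = (iteratedDeriv n F u).re := by
  induction n generalizing u with
  | zero => simpa using hf u hu
  | succ n ih =>
    rw [iteratedDeriv_succ, iteratedDeriv_succ]
    have ha : AnalyticAt ℂ (iteratedDeriv n F) u := by
      rw [iteratedDeriv_eq_iterate]
      exact (hF.analyticAt (hU.mem_nhds hu)).iterated_deriv n
    have hd := ha.differentiableAt.hasDerivAt.real_of_complex
    refine (hd.congr_of_eventuallyEq ?_).deriv
    filter_upwards [(hU.preimage Complex.continuous_ofReal).mem_nhds hu] with v hv using ih v hv

lemma measurable_subWeight (c : ℝ) : Measurable (subWeight c) := by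
  unfold subWeight; fun_prop

lemma subWeight_nonneg (c : ℝ) {r : ℝ} (hr : r ∈ Ioo (0 : ℝ) 1) : 0 ≤ subWeight c r := by
  have := Real.log_neg hr.1 hr.2
  have : 0 ≤ -Real.log r := by linarith
  have := hr.1.le
  unfold subWeight
  positivity

/-- The subordination integral, with complex parameter. -/
noncomputable def subIntegral (g : ℝ → ℝ) (ζ : ℂ) : ℂ :=
  ∫ r in Ioo (0 : ℝ) 1,
    Complex.exp (ζ / (Real.log r : ℝ)) * ((g r / ((-Real.log r) ^ ((3 : ℝ) / 2) * r) : ℝ) : ℂ)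

section
variable {g : ℝ → ℝ} {M : ℝ}

lemma norm_subIntegrand_le (hM : ∀ r ∈ Ioo (0 : ℝ) 1, |g r| ≤ M) (ζ : ℂ) {r : ℝ}
    (hr : r ∈ Ioo (0 : ℝ) 1) :
    ‖Complex.exp (ζ / (Real.log r : ℝ)) *
      ((g r / ((-Real.log r) ^ ((3 : ℝ) / 2) * r) : ℝ) : ℂ)‖ ≤ M * subWeight ζ.re r := by
  have h1 := Real.log_neg hr.1 hr.2
  have h2 : 0 < (-Real.log r) ^ ((3 : ℝ) / 2) * r :=
    mul_pos (Real.rpow_pos_of_pos (by linarith) _) hr.1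
  rw [norm_mul, Complex.norm_exp, Complex.div_ofReal_re, Complex.norm_real, Real.norm_eq_abs,
    abs_div, abs_of_pos h2, subWeight, ← mul_div_assoc, ← mul_div_assoc, mul_comm M]
  gcongr
  exact hM r hr

lemma norm_subIntegral_le (hM : ∀ r ∈ Ioo (0 : ℝ) 1, |g r| ≤ M) {ζ : ℂ} (hζ : 0 < ζ.re) :
    ‖subIntegral g ζ‖ ≤ M * (√π / √ζ.re) := by
  rw [← integral_subWeight hζ, ← integral_const_mul]
  refine norm_integral_le_of_norm_le ((integrableOn_subWeight hζ).const_mul M) ?_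
  exact ae_restrict_of_forall_mem measurableSet_Ioo fun r hr => norm_subIntegrand_le hM ζ hr

lemma differentiableAt_subIntegral
    (hg : AEStronglyMeasurable g (volume.restrict (Ioo 0 1)))
    (hM : ∀ r ∈ Ioo (0 : ℝ) 1, |g r| ≤ M) {ζ : ℂ} (hζ : 0 < ζ.re) :
    DifferentiableAt ℂ (subIntegral g) ζ := by
  have hmeas (z : ℂ) : AEStronglyMeasurable (fun r : ℝ => Complex.exp (z / (Real.log r : ℝ)) *
      ((g r / ((-Real.log r) ^ ((3 : ℝ) / 2) * r) : ℝ) : ℂ)) (volume.restrict (Ioo 0 1)) := by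
    have := hg.aemeasurable
    exact AEMeasurable.aestronglyMeasurable (by fun_prop)
  have h := hasDerivAt_integral_of_dominated_loc_of_deriv_le (𝕜 := ℂ)
    (μ := volume.restrict (Ioo 0 1))
    (F := fun z r => Complex.exp (z / (Real.log r : ℝ)) *
      ((g r / ((-Real.log r) ^ ((3 : ℝ) / 2) * r) : ℝ) : ℂ))
    (F' := fun z r => (1 / (Real.log r : ℂ)) * (Complex.exp (z / (Real.log r : ℝ)) *
      ((g r / ((-Real.log r) ^ ((3 : ℝ) / 2) * r) : ℝ) : ℂ)))
    (s := {z | ζ.re / 2 < z.re}) (x₀ := ζ)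
    (bound := fun r => 4 / ζ.re * M * subWeight (ζ.re / 4) r) ?_ ?_ ?_ ?_ ?_ ?_ ?_
  · exact h.2.differentiableAt
  · exact (isOpen_lt continuous_const Complex.continuous_re).mem_nhds (by simp; linarith)
  · exact Filter.Eventually.of_forall hmeas
  · refine ((integrableOn_subWeight hζ).const_mul M).mono' (hmeas ζ) ?_
    exact ae_restrict_of_forall_mem measurableSet_Ioo fun r hr => norm_subIntegrand_le hM ζ hr
  · have : AEStronglyMeasurable (fun r : ℝ => 1 / (Real.log r : ℂ)) (volume.restrict (Ioo 0 1)) :=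
      AEMeasurable.aestronglyMeasurable (by fun_prop)
    exact this.mul (hmeas ζ)
  · refine ae_restrict_of_forall_mem measurableSet_Ioo fun r hr z (hz : ζ.re / 2 < z.re) => ?_
    have h1 := Real.log_neg hr.1 hr.2
    have hM0 : 0 ≤ M := (abs_nonneg _).trans (hM r hr)
    set v := -(Real.log r)⁻¹ with hv
    have hv0 : 0 < v := by rw [hv]; exact neg_pos.2 (inv_lt_zero.2 h1)
    have h2 : 0 < (-Real.log r) ^ ((3 : ℝ) / 2) * r :=
      mul_pos (Real.rpow_pos_of_pos (by linarith) _) hr.1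
    have key : v * subWeight z.re r ≤ 4 / ζ.re * subWeight (ζ.re / 4) r := by
      rw [subWeight, subWeight, ← mul_div_assoc, ← mul_div_assoc]
      gcongr ?_ / _
      have e1 : z.re / Real.log r = -(z.re * v) := by rw [hv]; ring
      have e2 : ζ.re / 4 / Real.log r = -(ζ.re / 4 * v) := by rw [hv]; ring
      rw [e1, e2]
      calc v * Real.exp (-(z.re * v)) ≤ v * Real.exp (-(ζ.re / 2 * v)) := by gcongr
        _ = 4 / ζ.re * (ζ.re / 4 * v) * Real.exp (-(ζ.re / 2 * v)) := by field_simp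
        _ ≤ 4 / ζ.re * Real.exp (ζ.re / 4 * v) * Real.exp (-(ζ.re / 2 * v)) := by
            gcongr
            linarith [Real.add_one_le_exp (ζ.re / 4 * v)]
        _ = 4 / ζ.re * Real.exp (-(ζ.re / 4 * v)) := by
            rw [mul_assoc, ← Real.exp_add]; ring_nf
    rw [norm_mul]
    calc _ ≤ v * (M * subWeight z.re r) := by
          gcongr
          · rw [norm_div, norm_one, Complex.norm_real, Real.norm_eq_abs, abs_of_neg h1, hv]
            simp [inv_neg]
          · exact norm_subIntegrand_le hM z hr
      _ = M * (v * subWeight z.re r) := by ring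
      _ ≤ M * (4 / ζ.re * subWeight (ζ.re / 4) r) := by gcongr
      _ = _ := by ring
  · exact ((integrableOn_subWeight (by positivity)).const_mul _)
  · refine ae_of_all _ fun r z _ => ?_
    have := (((hasDerivAt_id z).div_const (Real.log r : ℂ)).cexp).mul_const
      ((g r / ((-Real.log r) ^ ((3 : ℝ) / 2) * r) : ℝ) : ℂ)
    refine this.congr_deriv ?_
    simp only [id]
    ring

lemma subIntegral_ofReal (g : ℝ → ℝ) (c : ℝ) :
    subIntegral g c = ((∫ r in Ioo (0 : ℝ) 1, subWeight c r * g r : ℝ) : ℂ) := by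
  rw [subIntegral, ← integral_complex_ofReal]
  congr 1 with r
  rw [subWeight]
  push_cast
  ring

lemma abs_iteratedDeriv_subordinated_le
    (hg : AEStronglyMeasurable g (volume.restrict (Ioo 0 1)))
    (hM : ∀ r ∈ Ioo (0 : ℝ) 1, |g r| ≤ M) (hM0 : 0 ≤ M) {h : ℝ → ℝ}
    (hh : ∀ u > 0, h u = u / (2 * √π) * ∫ r in Ioo (0 : ℝ) 1, subWeight (u ^ 2 / 4) r * g r)
    (n : ℕ) {t : ℝ} (ht : 0 < t) :
    |iteratedDeriv n h t| ≤ n.factorial * (2 * M) / (t / 4) ^ n := by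
  set F : ℂ → ℂ := fun z => z / ((2 * √π : ℝ) : ℂ) * subIntegral g (z ^ 2 / 4) with hF
  set U : Set ℂ := {z | 0 < (z ^ 2 / 4).re ∧ 0 < z.re}
  have hre (z : ℂ) : (z ^ 2 / 4).re = (z.re ^ 2 - z.im ^ 2) / 4 := by
    have : (4 : ℂ) = ((4 : ℝ) : ℂ) := by norm_num
    rw [this, Complex.div_ofReal_re, pow_two, Complex.mul_re]; ring
  have hU : IsOpen U := by
    have h1 : Continuous fun z : ℂ => (z ^ 2 / 4).re := Complex.continuous_re.comp (by fun_prop)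
    exact (isOpen_lt continuous_const h1).inter (isOpen_lt continuous_const Complex.continuous_re)
  have hFd : DifferentiableOn ℂ F U := fun z hz => by
    have h1 : DifferentiableAt ℂ (fun z : ℂ => subIntegral g (z ^ 2 / 4)) z :=
      DifferentiableAt.comp (g := subIntegral g) (f := fun z : ℂ => z ^ 2 / 4) z
        (differentiableAt_subIntegral hg hM hz.1) (by fun_prop)
    exact (DifferentiableAt.mul (by fun_prop) h1).differentiableWithinAt
  have htU : (t : ℂ) ∈ U := ⟨by rw [hre]; simp; positivity, by simpa⟩
  have hball {z : ℂ} (hz : z ∈ Metric.closedBall (t : ℂ) (t / 4)) :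
      3 / 4 * t ≤ z.re ∧ |z.im| ≤ t / 4 := by
    rw [mem_closedBall_iff_norm] at hz
    have h1 := (Complex.abs_re_le_norm (z - t)).trans hz
    have h2 := (Complex.abs_im_le_norm (z - t)).trans hz
    simp only [Complex.sub_re, Complex.ofReal_re, Complex.sub_im, Complex.ofReal_im,
      sub_zero] at h1 h2
    exact ⟨by linarith [(abs_le.1 h1).1], h2⟩
  have hlow {z : ℂ} (hz : z ∈ Metric.closedBall (t : ℂ) (t / 4)) :
      (t / 3) ^ 2 ≤ (z ^ 2 / 4).re := by
    obtain ⟨h1, h2⟩ := hball hz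
    have h3 : z.im ^ 2 ≤ (t / 4) ^ 2 := sq_le_sq' (abs_le.1 h2).1 (abs_le.1 h2).2
    rw [hre]
    nlinarith
  have hsub : Metric.closedBall (t : ℂ) (t / 4) ⊆ U := fun z hz =>
    ⟨lt_of_lt_of_le (by positivity) (hlow hz), by have := (hball hz).1; linarith⟩
  rw [iteratedDeriv_re_eq hU hFd (f := h) _ n t htU]
  · refine (Complex.abs_re_le_norm _).trans ?_
    refine Complex.norm_iteratedDeriv_le_of_forall_mem_sphere_norm_le n (by positivity) ?_ ?_
    · exact (hFd.mono hsub).diffContOnCl_ball subset_rfl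
    · intro z hz
      have hz' := Metric.sphere_subset_closedBall hz
      have hpos := (hsub hz').1
      have hn : ‖z‖ ≤ 5 / 4 * t := by
        have := norm_le_norm_add_norm_sub' z t
        rw [mem_sphere_iff_norm.1 hz, Complex.norm_real, Real.norm_of_nonneg ht.le] at this
        linarith
      have hs : t / 3 ≤ √(z ^ 2 / 4).re := Real.le_sqrt_of_sq_le (hlow hz')
      have hπ : 0 < √π := by positivity
      rw [hF, norm_mul, norm_div, Complex.norm_real]
      calc _ ≤ 5 / 4 * t / ‖2 * √π‖ * (M * (√π / (t / 3))) := by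
            have := (norm_subIntegral_le hM hpos).trans (b := M * (√π / √(z ^ 2 / 4).re))
              (c := M * (√π / (t / 3))) (by gcongr)
            have h2 : 0 < ‖2 * √π‖ := norm_pos_iff.2 (by positivity)
            gcongr
        _ = 15 / 8 * M := by
            rw [Real.norm_of_nonneg (show 0 ≤ 2 * √π by positivity)]; field_simp; ring
        _ ≤ 2 * M := by linarith
  · intro u hu
    have : (u : ℂ) ^ 2 / 4 = ((u ^ 2 / 4 : ℝ) : ℂ) := by push_cast; rfl
    rw [hh u (by simpa using hu.2), hF]
    simp only [this, subIntegral_ofReal]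
    rw [← Complex.ofReal_div, ← Complex.ofReal_mul, Complex.ofReal_re]

end

/-- The one-dimensional Laguerre heat kernel in the variable `r = e^{-s}`. -/
noncomputable def lagHeat (a x r y : ℝ) : ℝ :=
  (y / x) ^ (a / 2) * Real.exp (-((r * x + y) / (1 - r)) - a * Real.log r / 2) *
    besselI a (2 * √(r * x * y) / (1 - r)) / (1 - r)

section
variable {a x r : ℝ}

lemma rpow_mul_sqrt_rpow_eq {q y : ℝ} (a : ℝ) (hx : 0 < x) (hr : 0 < r) (hq : 0 < q) (hy : 0 < y)
    (m : ℕ) :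
    (y / x) ^ (a / 2) * Real.exp (-(a * Real.log r / 2)) *
      (2 * √(r * x * y) / q / 2) ^ (2 * (m : ℝ) + a) / q =
    (r * x / q) ^ m * (q ^ (m + a + 1))⁻¹ * y ^ ((m + a + 1) - 1) := by
  obtain ⟨X, rfl⟩ : ∃ X, x = Real.exp X := ⟨_, (Real.exp_log hx).symm⟩
  obtain ⟨R, rfl⟩ : ∃ R, r = Real.exp R := ⟨_, (Real.exp_log hr).symm⟩
  obtain ⟨Q, rfl⟩ : ∃ Q, q = Real.exp Q := ⟨_, (Real.exp_log hq).symm⟩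
  obtain ⟨Y, rfl⟩ : ∃ Y, y = Real.exp Y := ⟨_, (Real.exp_log hy).symm⟩
  rw [div_right_comm _ _ (2 : ℝ), mul_div_cancel_left₀ _ two_ne_zero, ← Real.rpow_natCast]
  simp only [← Real.exp_add, ← Real.exp_sub, ← Real.exp_half, ← Real.exp_mul, ← Real.exp_neg,
    Real.log_exp]
  congr 1
  ring

lemma lagHeat_eq_tsum (hx : 0 < x) (hr : r ∈ Ioo (0 : ℝ) 1) {y : ℝ} (hy : 0 < y) :
    lagHeat a x r y = ∑' m : ℕ,
      Real.exp (-(r * x / (1 - r))) * ((r * x / (1 - r)) ^ m / m.factorial) *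
      ((1 / (1 / (1 - r))) ^ (m + a + 1) * Real.Gamma (m + a + 1))⁻¹ *
        (y ^ ((m + a + 1) - 1) * Real.exp (-((1 / (1 - r)) * y))) := by
  rw [lagHeat, besselI, ← tsum_mul_left, ← tsum_div_const]
  congr 1 with m
  have e := rpow_mul_sqrt_rpow_eq a hx hr.1 (sub_pos.2 hr.2) hy m
  have e2 : Real.exp (-((r * x + y) / (1 - r)) - a * Real.log r / 2) =
      Real.exp (-(r * x / (1 - r))) * Real.exp (-((1 / (1 - r)) * y)) *
        Real.exp (-(a * Real.log r / 2)) := by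
    rw [← Real.exp_add, ← Real.exp_add]; ring_nf
  rw [e2, one_div_one_div, mul_inv]
  linear_combination (Real.exp (-(r * x / (1 - r))) * Real.exp (-((1 / (1 - r)) * y)) *
    ((m.factorial : ℝ) * Real.Gamma (m + a + 1))⁻¹) * e

lemma hasSum_lagHeat_coeff (b : ℝ) :
    HasSum (fun m : ℕ => Real.exp (-b) * (b ^ m / m.factorial)) 1 := by
  have := (NormedSpace.expSeries_div_hasSum_exp (𝔸 := ℝ) b).mul_left (Real.exp (-b))
  rwa [← Real.exp_eq_exp_ℝ, ← Real.exp_add, neg_add_cancel, Real.exp_zero] at this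

lemma integral_lagHeat (ha : -1 < a) (hx : 0 < x) (hr : r ∈ Ioo (0 : ℝ) 1) :
    ∫ y in Ioi 0, lagHeat a x r y = 1 := by
  rw [setIntegral_congr_fun measurableSet_Ioi fun y hy => lagHeat_eq_tsum hx hr hy]
  have hr0 := hr.1
  have hq : 0 < 1 - r := sub_pos.2 hr.2
  have hm (m : ℕ) : (0 : ℝ) < m + a + 1 := by have := m.cast_nonneg (α := ℝ); linarith
  have hG (m : ℕ) : 0 < (1 / (1 / (1 - r))) ^ (m + a + 1) * Real.Gamma (m + a + 1) :=
    mul_pos (by positivity) (Real.Gamma_pos_of_pos (hm m))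
  have key (m : ℕ) := Real.integral_rpow_mul_exp_neg_mul_Ioi (hm m) (one_div_pos.2 hq)
  have hint (m : ℕ) : IntegrableOn (fun y : ℝ => y ^ ((m + a + 1) - 1) *
      Real.exp (-((1 / (1 - r)) * y))) (Ioi 0) :=
    .of_integral_ne_zero (by rw [key]; exact (hG m).ne')
  have hval (m : ℕ) : ∫ y in Ioi 0, Real.exp (-(r * x / (1 - r))) *
      ((r * x / (1 - r)) ^ m / m.factorial) *
      ((1 / (1 / (1 - r))) ^ (m + a + 1) * Real.Gamma (m + a + 1))⁻¹ *
        (y ^ ((m + a + 1) - 1) * Real.exp (-((1 / (1 - r)) * y))) =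
      Real.exp (-(r * x / (1 - r))) * ((r * x / (1 - r)) ^ m / m.factorial) := by
    rw [integral_const_mul, key, inv_mul_cancel_right₀ (hG m).ne']
  have hs := hasSum_lagHeat_coeff (r * x / (1 - r))
  have h := hasSum_integral_of_summable_integral_norm
    (fun m => (hint m).const_mul (Real.exp (-(r * x / (1 - r))) *
      ((r * x / (1 - r)) ^ m / m.factorial) *
      ((1 / (1 / (1 - r))) ^ (m + a + 1) * Real.Gamma (m + a + 1))⁻¹)) ?_
  · simp only [hval] at h
    exact h.unique hs
  · refine hs.summable.congr fun m => ?_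
    refine (hval m).symm.trans ?_
    refine setIntegral_congr_fun measurableSet_Ioi fun y (hy : 0 < y) => ?_
    have := Real.Gamma_pos_of_pos (hm m)
    refine (Real.norm_of_nonneg ?_).symm
    positivity

lemma integrableOn_lagHeat (ha : -1 < a) (hx : 0 < x) (hr : r ∈ Ioo (0 : ℝ) 1) :
    IntegrableOn (lagHeat a x r) (Ioi 0) :=
  .of_integral_ne_zero (by rw [integral_lagHeat ha hx hr]; exact one_ne_zero)

lemma besselI_nonneg (ha : -1 < a) {z : ℝ} (hz : 0 ≤ z) : 0 ≤ besselI a z :=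
  tsum_nonneg fun m => by
    have := m.cast_nonneg (α := ℝ)
    have := Real.Gamma_pos_of_pos (show (0 : ℝ) < m + a + 1 by linarith)
    positivity

lemma lagHeat_nonneg (ha : -1 < a) (hx : 0 < x) (hr : r ∈ Ioo (0 : ℝ) 1) {y : ℝ} (hy : 0 < y) :
    0 ≤ lagHeat a x r y := by
  have hq : 0 < 1 - r := by linarith [hr.2]
  have := besselI_nonneg ha (z := 2 * √(r * x * y) / (1 - r)) (by positivity)
  unfold lagHeat
  positivity

@[fun_prop]
lemma measurable_besselI (a : ℝ) : Measurable (besselI a) := by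
  unfold besselI; fun_prop

lemma measurable_lagHeat (a x : ℝ) : Measurable fun p : ℝ × ℝ => lagHeat a x p.1 p.2 := by
  unfold lagHeat; fun_prop

end

section
variable {d : ℕ} {α x : Fin d → ℝ} {r : ℝ}

lemma volume_restrict_posOrthant (d : ℕ) :
    (volume : Measure (Fin d → ℝ)).restrict (posOrthant d) =
      Measure.pi fun _ => (volume : Measure ℝ).restrict (Ioi 0) :=
  Measure.restrict_pi_pi _ _

lemma measurableSet_posOrthant (d : ℕ) : MeasurableSet (posOrthant d) :=
  MeasurableSet.univ_pi fun _ => measurableSet_Ioi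

lemma integrableOn_prod_lagHeat (hα : ∀ j, -1 < α j) (hx : x ∈ posOrthant d)
    (hr : r ∈ Ioo (0 : ℝ) 1) :
    IntegrableOn (fun y : Fin d → ℝ => ∏ j, lagHeat (α j) (x j) r (y j)) (posOrthant d) := by
  rw [IntegrableOn, volume_restrict_posOrthant]
  exact Integrable.fintype_prod fun j => integrableOn_lagHeat (hα j) (hx j trivial) hr

lemma integral_prod_lagHeat (hα : ∀ j, -1 < α j) (hx : x ∈ posOrthant d)
    (hr : r ∈ Ioo (0 : ℝ) 1) :
    ∫ y in posOrthant d, ∏ j, lagHeat (α j) (x j) r (y j) = 1 := by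
  rw [volume_restrict_posOrthant, integral_fintype_prod_eq_prod]
  exact Finset.prod_eq_one fun j _ => integral_lagHeat (hα j) (hx j trivial) hr

lemma prod_lagHeat_nonneg (hα : ∀ j, -1 < α j) (hx : x ∈ posOrthant d)
    (hr : r ∈ Ioo (0 : ℝ) 1) {y : Fin d → ℝ} (hy : y ∈ posOrthant d) :
    0 ≤ ∏ j, lagHeat (α j) (x j) r (y j) :=
  Finset.prod_nonneg fun j _ => lagHeat_nonneg (hα j) (hx j trivial) hr (hy j trivial)

lemma measurable_prod_lagHeat (α x : Fin d → ℝ) :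
    Measurable fun p : (Fin d → ℝ) × ℝ => ∏ j, lagHeat (α j) (x j) p.2 (p.1 j) :=
  Finset.measurable_fun_prod _ fun j _ =>
    (measurable_lagHeat (α j) (x j)).comp (f := fun p : (Fin d → ℝ) × ℝ => (p.2, p.1 j))
      (by fun_prop)

/-- The Laguerre heat semigroup in the variable `r = e^{-s}`. -/
noncomputable def lagSemigroup (α : Fin d → ℝ) (f : (Fin d → ℝ) → ℝ) (x : Fin d → ℝ) (r : ℝ) : ℝ :=
  ∫ y in posOrthant d, (∏ j, lagHeat (α j) (x j) r (y j)) * f y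

lemma abs_lagSemigroup_le (hα : ∀ j, -1 < α j) (hx : x ∈ posOrthant d)
    {f : (Fin d → ℝ) → ℝ} {M : ℝ} (hf : ∀ y, |f y| ≤ M) (hr : r ∈ Ioo (0 : ℝ) 1) :
    |lagSemigroup α f x r| ≤ M := by
  have h := norm_integral_le_of_norm_le (f := fun y => (∏ j, lagHeat (α j) (x j) r (y j)) * f y)
    ((integrableOn_prod_lagHeat hα hx hr).mul_const M)
    (ae_restrict_of_forall_mem (measurableSet_posOrthant d) fun y hy => by
      have h0 := prod_lagHeat_nonneg hα hx hr hy
      rw [norm_mul, Real.norm_of_nonneg h0]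
      exact mul_le_mul_of_nonneg_left (hf y) h0)
  rwa [integral_mul_const, integral_prod_lagHeat hα hx hr, one_mul] at h

lemma stronglyMeasurable_lagSemigroup (α x : Fin d → ℝ) {f : (Fin d → ℝ) → ℝ}
    (hf : Measurable f) : StronglyMeasurable (lagSemigroup α f x) := by
  have h : Measurable fun p : (Fin d → ℝ) × ℝ =>
      (∏ j, lagHeat (α j) (x j) p.2 (p.1 j)) * f p.1 :=
    (measurable_prod_lagHeat α x).mul (hf.comp measurable_fst)
  exact h.stronglyMeasurable.integral_prod_left'

lemma plKernel_eq (t : ℝ) (y : Fin d → ℝ) :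
    plKernel d α t x y = t / (2 * √π) *
      ∫ r in Ioo (0 : ℝ) 1, subWeight (t ^ 2 / 4) r * ∏ j, lagHeat (α j) (x j) r (y j) := by
  rw [plKernel, ← integral_const_mul, ← integral_const_mul]
  congr 1 with r
  simp only [lagHeat, subWeight, Finset.prod_div_distrib, Finset.prod_const, Finset.card_univ,
    Fintype.card_fin, div_div]
  ring

lemma integrable_subWeight_mul_prod_lagHeat (hα : ∀ j, -1 < α j) (hx : x ∈ posOrthant d)
    {f : (Fin d → ℝ) → ℝ} {M : ℝ} (hfm : Measurable f) (hf : ∀ y, |f y| ≤ M) {c : ℝ}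
    (hc : 0 < c) :
    Integrable (fun p : (Fin d → ℝ) × ℝ =>
      subWeight c p.2 * ((∏ j, lagHeat (α j) (x j) p.2 (p.1 j)) * f p.1))
      ((volume.restrict (posOrthant d)).prod (volume.restrict (Ioo 0 1))) := by
  suffices h : Integrable (fun p : (Fin d → ℝ) × ℝ =>
      subWeight c p.2 * (∏ j, lagHeat (α j) (x j) p.2 (p.1 j)))
      ((volume.restrict (posOrthant d)).prod (volume.restrict (Ioo 0 1))) by
    have := h.mul_bdd (c := M) (hfm.comp measurable_fst).aestronglyMeasurable
      (ae_of_all _ fun p => hf p.1)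
    simpa only [mul_assoc, Function.comp_apply] using this
  have hmeas : Measurable fun p : (Fin d → ℝ) × ℝ =>
      subWeight c p.2 * (∏ j, lagHeat (α j) (x j) p.2 (p.1 j)) :=
    ((measurable_subWeight c).comp measurable_snd).mul (measurable_prod_lagHeat α x)
  refine (integrable_prod_iff' hmeas.aestronglyMeasurable).2
    ⟨ae_restrict_of_forall_mem measurableSet_Ioo fun r hr =>
      (integrableOn_prod_lagHeat hα hx hr).const_mul (subWeight c r), ?_⟩
  refine (integrableOn_subWeight hc).congr_fun (fun r hr => ?_) measurableSet_Ioo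
  have h : ∫ y in posOrthant d, ‖subWeight c r * ∏ j, lagHeat (α j) (x j) r (y j)‖ =
      ∫ y in posOrthant d, subWeight c r * ∏ j, lagHeat (α j) (x j) r (y j) :=
    setIntegral_congr_fun (measurableSet_posOrthant d) fun y hy => Real.norm_of_nonneg
      (mul_nonneg (subWeight_nonneg c hr) (prod_lagHeat_nonneg (y := y) hα hx hr hy))
  rw [h, integral_const_mul, integral_prod_lagHeat hα hx hr, mul_one]

lemma plP_eq (hα : ∀ j, -1 < α j) (hx : x ∈ posOrthant d)
    {f : (Fin d → ℝ) → ℝ} {M : ℝ} (hfm : Measurable f) (hf : ∀ y, |f y| ≤ M) {t : ℝ}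
    (ht : 0 < t) :
    plP d α t f x = t / (2 * √π) *
      ∫ r in Ioo (0 : ℝ) 1, subWeight (t ^ 2 / 4) r * lagSemigroup α f x r := by
  rw [plP, if_neg ht.ne']
  simp only [plKernel_eq, mul_assoc, ← integral_mul_const, lagSemigroup]
  rw [integral_const_mul, integral_integral_swap
    (integrable_subWeight_mul_prod_lagHeat hα hx hfm hf (c := t ^ 2 / 4) (by positivity))]
  simp only [integral_const_mul]

end

theorem laguerre_poisson_semigroup_iteratedDeriv_sup_bound
    (d : ℕ) (hd : 1 ≤ d) (α : Fin d → ℝ) (hα : ∀ j, -(1 / 2 : ℝ) < α j)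
    (n : ℕ) (hn : 0 < n) :
    ∃ C > 0, ∀ (f : (Fin d → ℝ) → ℝ) (M : ℝ), Measurable f → (∀ y, |f y| ≤ M) →
      ∀ t > (0 : ℝ), ∀ x ∈ posOrthant d,
        |iteratedDeriv n (fun u => plP d α u f x) t| ≤ C * M / t ^ n := by
  refine ⟨n.factorial * 2 * 4 ^ n, by positivity, fun f M hfm hf t ht x hx => ?_⟩
  have hα' : ∀ j, -1 < α j := fun j => by linarith [hα j]
  refine (abs_iteratedDeriv_subordinated_le
    (stronglyMeasurable_lagSemigroup α x hfm).aestronglyMeasurable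
    (fun r hr => abs_lagSemigroup_le hα' hx hf hr) ((abs_nonneg _).trans (hf 0))
    (fun u hu => plP_eq hα' hx hfm hf hu) n ht).trans_eq ?_
  rw [div_pow]
  field_simp
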